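/- arXiv:2410.14750 — 4 statements merged into one kernel-verified Lean document; each statement's English description precedes it below -/
import Mathlib

section
/- Let (R, m) be a local Artinian commutative ring with residue field F = R/m, and let μ and λ be cardinals (index sets). Then R^μ and R^λ are isomorphic as R-modules if and only if F^μ and F^λ are isomorphic as F-vector spaces. -/
universe u

open IsLocalRing in
/-- The coordinatewise residue map `R^ι → F^ι`. -/
noncomputable def piResidue (R : Type u) [CommRing R] [IsLocalRing R] (ι : Type u) :
    (ι → R) →ₗ[R] (ι → ResidueField R) :=
  LinearMap.compLeft (Algebra.linearMap R (ResidueField R)) ι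

open IsLocalRing in
theorem piResidue_apply (R : Type u) [CommRing R] [IsLocalRing R] (ι : Type u)
    (f : ι → R) (i : ι) : piResidue R ι f i = residue R (f i) := rfl

open IsLocalRing in
theorem piResidue_surjective (R : Type u) [CommRing R] [IsLocalRing R] (ι : Type u) :
    Function.Surjective (piResidue R ι) := by
  intro f
  choose g hg using fun i => residue_surjective (f i)
  exact ⟨g, funext hg⟩

open IsLocalRing in
/-- The kernel of the coordinatewise residue map is `m • R^ι` (as `m` is finitely generated). -/
theorem ker_piResidue (R : Type u) [CommRing R] [IsLocalRing R] [IsNoetherianRing R]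
    (ι : Type u) :
    LinearMap.ker (piResidue R ι) = maximalIdeal R • (⊤ : Submodule R (ι → R)) := by
  apply le_antisymm
  · intro f hf
    have hf' : ∀ i, f i ∈ maximalIdeal R := by
      intro i
      rw [← residue_eq_zero_iff, ← piResidue_apply, LinearMap.mem_ker.mp hf]
      rfl
    obtain ⟨s, hs⟩ := IsNoetherian.noetherian (maximalIdeal R)
    have h2 : ∀ i, ∃ c : s → R, ∑ a, c a • (a : R) = f i := by
      intro i
      rw [← Submodule.mem_span_finset']
      have := hf' i
      rwa [← hs] at this
    choose c hc using h2
    have : f = ∑ a : s, (a : R) • (fun i => c i a) := by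
      funext i
      rw [← hc i, Finset.sum_apply]
      refine Finset.sum_congr rfl fun a _ => ?_
      simp [mul_comm]
    rw [this]
    refine Submodule.sum_mem _ fun a _ => Submodule.smul_mem_smul ?_ trivial
    rw [← hs]
    exact Submodule.subset_span a.2
  · rw [Submodule.smul_le]
    intro r hr f _
    rw [LinearMap.mem_ker]
    funext i
    rw [piResidue_apply]
    simp [(residue_eq_zero_iff r).mpr hr]

/-- Nakayama for a nilpotent ideal, without finiteness. -/
theorem eq_top_of_sup_nilpotent_smul {R M : Type*} [CommRing R] [AddCommGroup M] [Module R M]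
    (I : Ideal R) (hI : IsNilpotent I) (N : Submodule R M)
    (h : N ⊔ I • (⊤ : Submodule R M) = ⊤) : N = ⊤ := by
  have key : ∀ n : ℕ, N ⊔ I ^ n • (⊤ : Submodule R M) = ⊤ := by
    intro n
    induction n with
    | zero => simp
    | succ n ih =>
      rw [eq_top_iff]
      calc (⊤ : Submodule R M) = N ⊔ I ^ n • (N ⊔ I • (⊤ : Submodule R M)) := by rw [h, ih]
        _ ≤ N ⊔ I ^ (n + 1) • (⊤ : Submodule R M) := by
          rw [Submodule.smul_sup, ← Submodule.mul_smul, ← pow_succ]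
          exact sup_le le_sup_left (sup_le (Submodule.smul_le_right.trans le_sup_left) le_sup_right)
  obtain ⟨n, hn⟩ := hI
  simpa [hn] using key n

open IsLocalRing in
/-- Every nonzero ideal of a Noetherian local ring surjects onto the residue field. -/
theorem exists_ne_zero_to_residueField (R : Type u) [CommRing R] [IsLocalRing R]
    [IsNoetherianRing R] (I : Ideal R) (hI : I ≠ ⊥) :
    ∃ φ : I →ₗ[R] ResidueField R, φ ≠ 0 := by
  have : Nontrivial I := Submodule.nontrivial_iff_ne_bot.mpr hI
  obtain ⟨N, hN, -⟩ := (eq_top_or_exists_le_coatom (⊥ : Submodule R I)).resolve_left bot_ne_top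
  have hs : IsSimpleModule R (I ⧸ N) := isSimpleModule_iff_isCoatom.mpr hN
  obtain ⟨J, hJ, ⟨e⟩⟩ := isSimpleModule_iff_quot_maximal.mp hs
  obtain rfl := eq_maximalIdeal hJ
  let e' : (I ⧸ N) ≃ₗ[R] ResidueField R := e
  refine ⟨e'.toLinearMap ∘ₗ N.mkQ, fun h => hN.1 ?_⟩
  rw [eq_top_iff]
  intro x _
  have hx := LinearMap.congr_fun h x
  simpa using hx

open IsLocalRing in
/-- A basis of `F^ι` lifts to a basis of `R^ι`. -/
theorem exists_basis_pi_of_basis_residue (R : Type u) [CommRing R]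
    [IsLocalRing R] [IsArtinianRing R] (ι : Type u) (B : Type u)
    (b : Module.Basis B (ResidueField R) (ι → ResidueField R)) :
    Nonempty (Module.Basis B R (ι → R)) := by
  choose v hv using fun k => piResidue_surjective R ι (b k)
  have hli : LinearIndependent R v := by
    rw [linearIndependent_iff']
    intro s g hg
    by_contra! hne
    obtain ⟨k, hk, hgk⟩ := hne
    let I : Ideal R := Ideal.span (g '' s)
    have hmem : ∀ j ∈ s, g j ∈ I := fun j hj => Ideal.subset_span ⟨j, hj, rfl⟩
    have hI : I ≠ ⊥ := fun h => hgk (by simpa [h] using hmem k hk)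
    obtain ⟨φ, hφ⟩ := exists_ne_zero_to_residueField R I hI
    classical
    let G : B → I := fun j => if h : j ∈ s then ⟨g j, hmem j h⟩ else 0
    have hG : ∀ j ∈ s, (G j : R) = g j := fun j hj => by simp [G, hj]
    have hsum : ∑ j ∈ s, φ (G j) • b j = 0 := by
      funext i
      have h1 : ∑ j ∈ s, v j i • G j = 0 := by
        apply Subtype.ext
        have := congrFun hg i
        simp only [Finset.sum_apply, Pi.smul_apply, smul_eq_mul, Pi.zero_apply] at this
        rw [AddSubmonoidClass.coe_finsetSum, Submodule.coe_zero, ← this]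
        refine Finset.sum_congr rfl fun j hj => ?_
        rw [Submodule.coe_smul, hG j hj, smul_eq_mul, mul_comm]
      have h2 := congrArg φ h1
      rw [map_sum, map_zero] at h2
      rw [Finset.sum_apply, Pi.zero_apply, ← h2]
      refine Finset.sum_congr rfl fun j hj => ?_
      rw [map_smul, ← hv j, Pi.smul_apply, piResidue_apply, smul_eq_mul, Algebra.smul_def,
        mul_comm]
      rfl
    have h0 := linearIndependent_iff'.mp b.linearIndependent s _ hsum
    apply hφ
    ext ⟨x, hx⟩
    rw [LinearMap.zero_apply]
    refine Submodule.span_induction (p := fun x hx => φ ⟨x, hx⟩ = 0) ?_ ?_ ?_ ?_ hx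
    · rintro _ ⟨j, hj, rfl⟩
      rw [← h0 j hj]
      congr 1
      exact Subtype.ext (hG j hj).symm
    · exact map_zero φ
    · intro x y hx hy h1 h2
      have : φ (⟨x, hx⟩ + ⟨y, hy⟩) = 0 := by rw [map_add, h1, h2, add_zero]
      exact this
    · intro a x hx h1
      have : φ (a • ⟨x, hx⟩) = 0 := by rw [map_smul, h1, smul_zero]
      exact this
  have hnil : IsNilpotent (maximalIdeal R) := by
    rw [← jacobson_eq_maximalIdeal (⊥ : Ideal R) bot_ne_top]
    exact IsArtinianRing.isNilpotent_jacobson_bot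
  have hspan : Submodule.span R (Set.range v) = ⊤ := by
    apply eq_top_of_sup_nilpotent_smul _ hnil
    rw [← ker_piResidue, eq_top_iff]
    intro x _
    have hx := b.linearCombination_repr (piResidue R ι x)
    choose r hr using fun k => residue_surjective (R := R) (b.repr (piResidue R ι x) k)
    set y := ∑ k ∈ (b.repr (piResidue R ι x)).support, r k • v k with hy
    have hyN : y ∈ Submodule.span R (Set.range v) :=
      Submodule.sum_mem _ fun k _ => Submodule.smul_mem _ _ (Submodule.subset_span ⟨k, rfl⟩)
    have hker : x - y ∈ LinearMap.ker (piResidue R ι) := by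
      rw [LinearMap.mem_ker, map_sub, sub_eq_zero, hy, map_sum]
      conv_lhs => rw [← hx, Finsupp.linearCombination_apply, Finsupp.sum]
      refine Finset.sum_congr rfl fun k _ => ?_
      rw [map_smul, hv, ← hr k]
      exact algebraMap_smul (ResidueField R) (r k) (b k)
    rw [← add_sub_cancel y x]
    exact Submodule.add_mem_sup hyN hker
  exact ⟨Module.Basis.mk hli hspan.ge⟩



/-- Let `(R, m)` be a local Artinian commutative ring with residue field
`F = R/m`, and let `ι, κ` be index sets. Then `R^ι ≅ R^κ` as `R`-modules if and only if
`F^ι ≅ F^κ` as `F`-vector spaces. -/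
theorem pi_linearEquiv_iff_residueField_pi_linearEquiv (R : Type u) [CommRing R]
    [IsLocalRing R] [IsArtinianRing R] (ι κ : Type u) :
    Nonempty ((ι → R) ≃ₗ[R] (κ → R)) ↔
      Nonempty ((ι → IsLocalRing.ResidueField R) ≃ₗ[IsLocalRing.ResidueField R]
        (κ → IsLocalRing.ResidueField R)) := by
  constructor
  · rintro ⟨e⟩
    let q : ((ι → R) ⧸ LinearMap.ker (piResidue R ι)) ≃ₗ[R]
        ((κ → R) ⧸ LinearMap.ker (piResidue R κ)) :=
      Submodule.Quotient.equiv _ _ e (by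
        rw [ker_piResidue, ker_piResidue, Submodule.map_smul'', Submodule.map_top,
          LinearEquiv.range])
    let t : (ι → IsLocalRing.ResidueField R) ≃ₗ[R] (κ → IsLocalRing.ResidueField R) :=
      ((piResidue R ι).quotKerEquivOfSurjective (piResidue_surjective R ι)).symm ≪≫ₗ q ≪≫ₗ
        ((piResidue R κ).quotKerEquivOfSurjective (piResidue_surjective R κ))
    exact ⟨t.extendScalarsOfSurjective IsLocalRing.residue_surjective⟩
  · rintro ⟨e⟩
    let b := Module.Basis.ofVectorSpace (IsLocalRing.ResidueField R)
      (ι → IsLocalRing.ResidueField R)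
    obtain ⟨b₁⟩ := exists_basis_pi_of_basis_residue R ι _ b
    obtain ⟨b₂⟩ := exists_basis_pi_of_basis_residue R κ _ (b.map e)
    exact ⟨b₁.equiv b₂ (Equiv.refl _)⟩
end

section
/- Let R be a Noetherian commutative ring and λ an infinite cardinal (index set). Then the R-module R^λ is projective if and only if R is Artinian. -/
universe u

/-- Powers of a Noetherian ring are flat. -/
lemma pi_flat (R : Type u) [CommRing R] [IsNoetherianRing R] (ι : Type u) :
    Module.Flat R (ι → R) := by
  refine Module.Flat.of_forall_isTrivialRelation ?_
  intro l f x h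
  let F : (Fin l → R) →ₗ[R] R := ∑ i, f i • LinearMap.proj i
  have hF : ∀ z, F z = ∑ i, f i * z i := fun z => by simp [F]
  obtain ⟨k, g, hg⟩ := Submodule.fg_iff_exists_fin_generating_family.mp
    (IsNoetherian.noetherian (LinearMap.ker F))
  have hx : ∀ c : ι, ∃ y : Fin k → R, ∑ j, y j • g j = fun i => x i c := by
    intro c
    rw [← Submodule.mem_span_range_iff_exists_fun, hg, LinearMap.mem_ker, hF]
    simpa using congrFun h c
  choose y hy using hx
  refine ⟨k, fun i j => g j i, fun j c => y c j, ?_, ?_⟩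
  · intro i
    ext c
    have := congrFun (hy c) i
    simp only [Finset.sum_apply, Pi.smul_apply, smul_eq_mul] at this ⊢
    rw [← this]
    exact Finset.sum_congr rfl fun _ _ => mul_comm _ _
  · intro j
    rw [← hF, ← LinearMap.mem_ker, ← hg]
    exact Submodule.subset_span ⟨j, rfl⟩

open IsLocalRing TensorProduct in
/-- Flat modules over an Artinian local ring are free. -/
lemma free_of_flat_artinian_local (R : Type u) [CommRing R] [IsArtinianRing R] [IsLocalRing R]
    (M : Type u) [AddCommGroup M] [Module R M] [Module.Flat R M] : Module.Free R M := by
  let w := Module.Free.chooseBasis (ResidueField R) (ResidueField R ⊗[R] M)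
  have ⟨v, eq⟩ := (TensorProduct.mk_surjective R M (ResidueField R)
    Ideal.Quotient.mk_surjective).comp_left w
  replace eq : (TensorProduct.mk R (ResidueField R) M 1) ∘ v = w := eq
  refine .of_basis <| .mk (Module.IsLocalRing.linearIndependent_of_flat v (eq ▸ w.linearIndependent)) ?_
  set N := Submodule.span R (Set.range v) with hN
  have h1 : N.map (TensorProduct.mk R (ResidueField R) M 1) = ⊤ := by
    rw [hN, Submodule.map_span, ← Submodule.restrictScalars_span R (ResidueField R)
      Ideal.Quotient.mk_surjective, Submodule.restrictScalars_eq_top_iff, ← Set.range_comp]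
    rw [← w.span_eq]
    exact congrArg _ (congrArg _ eq)
  have h2 : N ⊔ maximalIdeal R • (⊤ : Submodule R M) = ⊤ := by
    have := Submodule.comap_map_eq (TensorProduct.mk R (ResidueField R) M 1) N
    rw [h1, Submodule.comap_top] at this
    have hk : LinearMap.ker (TensorProduct.mk R (ResidueField R) M 1) =
        maximalIdeal R • (⊤ : Submodule R M) :=
      LinearMap.ker_tensorProductMk M (I := maximalIdeal R)
    rw [hk] at this
    exact this.symm
  have h3 : ∀ n, N ⊔ maximalIdeal R ^ n • (⊤ : Submodule R M) = ⊤ := by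
    intro n
    induction n with
    | zero => simp
    | succ n ih =>
      refine top_le_iff.mp (h2.ge.trans (sup_le le_sup_left ?_))
      calc maximalIdeal R • (⊤ : Submodule R M)
          = maximalIdeal R • (N ⊔ maximalIdeal R ^ n • (⊤ : Submodule R M)) := by rw [ih]
        _ ≤ _ := by
          rw [Submodule.smul_sup, pow_succ', Submodule.mul_smul]
          exact sup_le_sup Submodule.smul_le_right le_rfl
  obtain ⟨n, hn⟩ := IsArtinianRing.isNilpotent_jacobson_bot (R := R)
  have hm : maximalIdeal R ^ n = ⊥ := by
    rw [← IsLocalRing.jacobson_eq_maximalIdeal (⊥ : Ideal R) bot_ne_top]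
    exact hn
  have := h3 n
  rw [hm, Submodule.bot_smul, sup_bot_eq] at this
  exact this.ge

lemma proj_pi (R : Type u) [CommRing R] (ι : Type u) [Finite ι] (M : ι → Type u)
    [∀ i, AddCommGroup (M i)] [∀ i, Module R (M i)] [∀ i, Module.Projective R (M i)] :
    Module.Projective R (∀ i, M i) := by
  classical
  cases nonempty_fintype ι
  exact .of_equiv (DirectSum.linearEquivFunOnFintype R ι M)

lemma proj_finsupp (R : Type u) [CommRing R] (B : Type u) (M : Type u)
    [AddCommGroup M] [Module R M] [Module.Projective R M] :
    Module.Projective R (B →₀ M) := by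
  classical
  exact .of_equiv (finsuppLequivDFinsupp R (ι := B) (M := M)).symm

lemma artinian_imp (R : Type u) [CommRing R] [IsArtinianRing R] (ι : Type u) :
    Module.Projective R (ι → R) := by
  classical
  let L : PrimeSpectrum R → Type u := fun p => Localization.AtPrime p.asIdeal
  let e : R ≃ₗ[R] (∀ p, L p) := (PrimeSpectrum.toPiLocalizationEquiv R).toLinearEquiv
  have hpi : Module.Projective R (∀ p, L p) := .of_equiv e
  have hL : ∀ p, Module.Projective R (L p) := fun p =>
    .of_split (LinearMap.single R L p) (LinearMap.proj p) (by ext; simp)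
  have hLι : ∀ p, Module.Projective R (ι → L p) := by
    intro p
    have : IsNoetherianRing (L p) := inferInstanceAs (IsNoetherianRing (Localization.AtPrime _))
    have : IsArtinianRing (L p) := inferInstanceAs (IsArtinianRing (Localization _))
    have := pi_flat (L p) ι
    have := free_of_flat_artinian_local (L p) (ι → L p)
    have := hL p
    have := proj_finsupp R (Module.Free.ChooseBasisIndex (L p) (ι → L p)) (L p)
    exact .of_equiv ((Module.Free.chooseBasis (L p) (ι → L p)).repr.restrictScalars R).symm
  have := proj_pi R (PrimeSpectrum R) (fun p => ι → L p)
  let e1 : (ι → R) ≃ₗ[R] (ι → ∀ p, L p) := LinearEquiv.piCongrRight fun _ => e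
  refine .of_split (M := ∀ p, ι → L p)
    (LinearMap.pi fun p => LinearMap.pi fun i => LinearMap.proj p ∘ₗ LinearMap.proj i ∘ₗ e1.toLinearMap)
    (e1.symm.toLinearMap ∘ₗ
      LinearMap.pi fun i => LinearMap.pi fun p => LinearMap.proj i ∘ₗ LinearMap.proj p) ?_
  ext1 x
  apply e1.injective
  simp
  rfl

lemma baire_seq (R : Type u) (S : ℕ → Set (ℕ → R))
    (hc : ∀ k (a : ℕ → R), a ∉ S k → ∃ N, ∀ a' : ℕ → R, (∀ i < N, a' i = a i) → a' ∉ S k)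
    (hU : ∀ a, ∃ k, a ∈ S k) [Nonempty R] :
    ∃ (k : ℕ) (a : ℕ → R) (N : ℕ), ∀ a' : ℕ → R, (∀ i < N, a' i = a i) → a' ∈ S k := by
  let : UniformSpace R := ⊥
  have : DiscreteTopology R := ⟨rfl⟩
  have : (uniformity R).IsCountablyGenerated := by
    change (Filter.principal _).IsCountablyGenerated
    infer_instance
  have hopen : ∀ (a : ℕ → R) N, IsOpen {a' : ℕ → R | ∀ i < N, a' i = a i} := by
    intro a N
    have : {a' : ℕ → R | ∀ i < N, a' i = a i} = Set.pi (Finset.range N : Set ℕ) fun i => {a i} := by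
      ext; simp
    rw [this]
    exact isOpen_set_pi (Finset.finite_toSet _) fun _ _ => isOpen_discrete _
  obtain ⟨k, a, ha⟩ := nonempty_interior_of_iUnion_of_closed (f := S) (fun k => by
    rw [← isOpen_compl_iff, isOpen_iff_mem_nhds]
    intro a ha
    obtain ⟨N, hN⟩ := hc k a ha
    exact Filter.mem_of_superset ((hopen a N).mem_nhds (by simp)) hN) (by
    ext a; simpa using hU a)
  rw [mem_interior] at ha
  obtain ⟨t, ht, hto, hat⟩ := ha
  rw [isOpen_pi_iff] at hto
  obtain ⟨I, u, hu, hI⟩ := hto a hat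
  obtain ⟨N, hN⟩ := I.exists_nat_subset_range
  refine ⟨k, a, N, fun a' ha' => ht (hI ?_)⟩
  intro i hi
  rw [ha' i (Finset.mem_range.mp (hN hi))]
  exact (hu i hi).2

lemma key (R : Type u) [CommRing R] [IsNoetherianRing R]
    (h : Module.Projective R (ℕ → R)) (p : Ideal R) [hp : p.IsPrime] : p.IsMaximal := by
  classical
  by_contra hpm
  obtain ⟨m, hm, hpm'⟩ := Ideal.exists_le_maximal p hp.ne_top
  obtain ⟨x, hxm, hxp⟩ := Set.exists_of_ssubset (lt_of_le_of_ne hpm' fun h => hpm (SetLike.coe_injective h ▸ hm))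
  obtain ⟨s, hs⟩ := Module.projective_def'.mp h
  let D := R ⧸ p
  let y : D := Ideal.Quotient.mk p x
  have hy0 : y ≠ 0 := fun h => hxp (Ideal.Quotient.eq_zero_iff_mem.mp h)
  have hyu : ¬ IsUnit y := by
    intro hu
    obtain ⟨z, hz⟩ := hu.exists_right_inv
    obtain ⟨z, rfl⟩ := Ideal.Quotient.mk_surjective z
    rw [← map_mul, ← map_one (Ideal.Quotient.mk p), Ideal.Quotient.eq] at hz
    apply hm.ne_top
    rw [Ideal.eq_top_iff_one]
    have := m.sub_mem (m.mul_mem_right z hxm) (hpm' hz)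
    simpa using this
  have hsep : ∀ d : D, d ≠ 0 → ∃ N, ¬ y ^ N ∣ d := by
    intro d hd
    by_contra! hcon
    have := Ideal.iInf_pow_eq_bot_of_isDomain (Ideal.span {y})
      (by rwa [Ne, Ideal.span_singleton_eq_top])
    apply hd
    rw [← Ideal.mem_bot, ← this, Ideal.mem_iInf]
    intro N
    rw [Ideal.span_singleton_pow, Ideal.mem_span_singleton]
    exact hcon N
  let q : ((ℕ → R) →₀ R) →ₗ[R] ((ℕ → R) →₀ D) :=
    Finsupp.mapRange.linearMap (Algebra.linearMap R D)
  let φ : (ℕ → R) →ₗ[R] ((ℕ → R) →₀ D) := q ∘ₗ s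
  have hφ : ∀ a, φ a = 0 → ∀ n, a n ∈ p := by
    intro a ha n
    have h1 : ∀ b, s a b ∈ p := by
      intro b
      have := DFunLike.congr_fun ha b
      exact Ideal.Quotient.eq_zero_iff_mem.mp this
    have h2 := congrFun (LinearMap.congr_fun hs a) n
    simp only [LinearMap.comp_apply, LinearMap.id_apply, Finsupp.linearCombination_apply] at h2
    rw [← h2, Finsupp.sum, Finset.sum_apply]
    exact p.sum_mem fun b _ => p.mul_mem_right _ (h1 b)
  let μ : (ℕ → R) →ₗ[R] (ℕ → R) := LinearMap.pi fun n => x ^ n • LinearMap.proj n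
  have hμ : ∀ a n, μ a n = x ^ n * a n := fun a n => rfl
  let g : (ℕ → R) →ₗ[R] ((ℕ → R) →₀ D) := φ ∘ₗ μ
  have hg0 : ∀ a, g a = 0 → ∀ n, a n ∈ p := by
    intro a ha n
    have := hφ (μ a) ha n
    rw [hμ] at this
    exact (hp.mem_or_mem this).resolve_left fun h => hxp (hp.mem_of_pow_mem _ h)
  have hgN : ∀ a N, (∀ i < N, a i = 0) → ∀ b, y ^ N ∣ g a b := by
    intro a N ha b
    have : μ a = x ^ N • (fun n => x ^ (n - N) * a n : ℕ → R) := by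
      ext n
      rw [hμ]
      by_cases hn : n < N
      · simp [ha n hn]
      · simp only [Pi.smul_apply, smul_eq_mul]
        rw [← mul_assoc, ← pow_add, Nat.add_sub_cancel' (not_lt.mp hn)]
    change y ^ N ∣ φ (μ a) b
    rw [this, map_smul, Finsupp.smul_apply, Algebra.smul_def, map_pow]
    exact Dvd.intro _ rfl
  have hL : ∀ a, ∃ N, ∀ a', (∀ i < N, a' i = a i) → (g a).support ⊆ (g a').support := by
    intro a
    choose! N hN using hsep
    refine ⟨(g a).support.sup fun b => N (g a b), fun a' ha' b hb => ?_⟩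
    rw [Finsupp.mem_support_iff] at hb ⊢
    intro h0
    apply hN _ hb
    have h1 := hgN (a - a') ((g a).support.sup fun b => N (g a b)) (fun i hi => by simp [ha' i hi]) b
    rw [map_sub, Finsupp.sub_apply, h0, sub_zero] at h1
    exact (pow_dvd_pow y (Finset.le_sup (f := fun b => N (g a b))
      (Finsupp.mem_support_iff.mpr hb))).trans h1
  obtain ⟨k, a, N, haN⟩ := baire_seq R (fun k => {a | (g a).support.card ≤ k})
    (by
      intro k a ha
      obtain ⟨N, hN⟩ := hL a
      refine ⟨N, fun a' ha' h => ha ?_⟩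
      exact (Finset.card_le_card (hN a' ha')).trans h)
    (fun a => ⟨(g a).support.card, le_refl (g a).support.card⟩)
  -- maximal support
  obtain ⟨c, hc, hcmax⟩ : ∃ c : ℕ → R, (∀ i < N, c i = a i) ∧
      ∀ c' : ℕ → R, (∀ i < N, c' i = a i) → (g c').support.card ≤ (g c).support.card := by
    let P : ℕ → Prop := fun j => ∃ c : ℕ → R, (∀ i < N, c i = a i) ∧ (g c).support.card = j
    have hP : P (Nat.findGreatest P k) :=
      Nat.findGreatest_spec (m := (g a).support.card) (haN a fun _ _ => rfl) ⟨a, fun _ _ => rfl, rfl⟩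
    obtain ⟨c, hc, hcard⟩ := hP
    refine ⟨c, hc, fun c' hc' => ?_⟩
    rw [hcard]
    exact Nat.le_findGreatest (haN c' hc') ⟨c', hc', rfl⟩
  obtain ⟨M, hM⟩ := hL c
  set T := (g c).support with hT
  have hsub : ∀ t : ℕ → R, (∀ i < max M N, t i = 0) → (g t).support ⊆ T := by
    intro t ht
    have h1 := hM (c + t) fun i hi => by simp [ht i (lt_max_of_lt_left hi)]
    have h2 := hcmax (c + t) fun i hi => by simp [ht i (lt_max_of_lt_right hi), hc i hi]
    have h3 := Finset.eq_of_subset_of_card_le h1 h2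
    intro b hb
    by_contra hbT
    have h4 : g c b = 0 := by simpa [hT] using hbT
    have h5 : g (c + t) b = 0 := by rw [h3] at hbT; simpa using hbT
    rw [map_add, Finsupp.add_apply, h4, zero_add] at h5
    exact (Finsupp.mem_support_iff.mp hb) h5
  let E : Fin (T.card + 1) → (ℕ → R) := fun j => Pi.single (max M N + j) 1
  let v : Fin (T.card + 1) → (T → D) := fun j b => g (E j) b
  have hv : LinearIndependent D v := by
    rw [Fintype.linearIndependent_iff]
    intro d hd j
    choose r hr using fun j => Ideal.Quotient.mk_surjective (I := p) (d j)
    let t : ℕ → R := ∑ j, r j • E j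
    have ht : ∀ i < max M N, t i = 0 := by
      intro i hi
      simp only [t, E, Finset.sum_apply, Pi.smul_apply]
      refine Finset.sum_eq_zero fun j _ => ?_
      rw [Pi.single_eq_of_ne (by omega), smul_zero]
    have hgt : g t = 0 := by
      ext b
      by_cases hb : b ∈ T
      · have := congrFun hd ⟨b, hb⟩
        simp only [v, Finset.sum_apply, Pi.smul_apply, Pi.zero_apply, ← hr] at this
        simp only [t, map_sum, map_smul, Finsupp.finsetSum_apply, Finsupp.smul_apply,
          Finsupp.zero_apply]
        exact this
      · simpa using fun h => hb (hsub t ht (Finsupp.mem_support_iff.mpr h))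
    have := hg0 t hgt (max M N + j)
    have h6 : t (max M N + j) = r j := by
      simp only [t, E, Finset.sum_apply, Pi.smul_apply]
      rw [Finset.sum_eq_single j]
      · simp
      · intro b _ hb
        rw [Pi.single_eq_of_ne (by have := Fin.val_ne_of_ne hb; omega), smul_zero]
      · simp
    rw [h6] at this
    rw [← hr]
    exact Ideal.Quotient.eq_zero_iff_mem.mpr this
  have := hv.fintype_card_le_finrank
  simp at this

theorem pi_projective_iff_isArtinianRing (R : Type u) [CommRing R] [IsNoetherianRing R]
    (ι : Type u) [Infinite ι] :
    Module.Projective R (ι → R) ↔ IsArtinianRing R := by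
  constructor
  · intro h
    rw [isArtinianRing_iff_krullDimLE_zero, Ring.krullDimLE_zero_iff]
    intro p hp
    let f := Infinite.natEmbedding ι
    refine key R (.of_split (Function.ExtendByZero.linearMap R f) (LinearMap.funLeft R R f) ?_) p
    ext1 a
    ext n
    simp [LinearMap.funLeft, f.injective.extend_apply]
  · intro h
    exact artinian_imp R ι
end

section
/- Let (R, m) be a local Artinian commutative ring and λ an infinite cardinal (index set). Then R^λ is a free R-module and its rank equals card(R/m)^λ (cardinal exponentiation), where R/m is the residue field of R. -/
universe u

open IsLocalRing TensorProduct

theorem aux_mem_smul_top {R : Type u} [CommRing R] {ι : Type u} (I : Ideal R) (hI : I.FG)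
    (f : ι → R) (hf : ∀ i, f i ∈ I) : f ∈ I • (⊤ : Submodule R (ι → R)) := by
  obtain ⟨s, hs⟩ := hI
  have h : ∀ i, ∃ g : R → R, ∑ a ∈ s, g a • a = f i := by
    intro i
    have := hf i
    rw [← hs] at this
    obtain ⟨g, _, hg⟩ := Submodule.mem_span_finset.1 this
    exact ⟨g, hg⟩
  choose g hg using h
  have : f = ∑ a ∈ s, a • (fun i => g i a) := by
    ext i
    rw [← hg i]
    simp [Finset.sum_apply, mul_comm]
  rw [this]
  refine Submodule.sum_mem _ fun a ha => Submodule.smul_mem_smul ?_ trivial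
  rw [← hs]
  exact Submodule.subset_span ha

theorem aux_nakayama {R M : Type u} [CommRing R] [AddCommGroup M] [Module R M] (I : Ideal R)
    (hI : IsNilpotent I) (N : Submodule R M) (h : N ⊔ I • (⊤ : Submodule R M) = ⊤) : N = ⊤ := by
  obtain ⟨n, hn⟩ := hI
  have key : ∀ n : ℕ, N ⊔ I ^ n • (⊤ : Submodule R M) = ⊤ := by
    intro n
    induction n with
    | zero => simp
    | succ k ih =>
      refine eq_top_iff.2 (h.ge.trans ?_)
      refine sup_le le_sup_left ?_
      have e : I • (⊤ : Submodule R M) = I • N ⊔ I ^ (k + 1) • (⊤ : Submodule R M) := by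
        have := congrArg (fun P : Submodule R M => I • P) ih
        simp only [Submodule.smul_sup] at this
        rw [← this, pow_succ', Submodule.mul_smul]
      have e2 : I • N ≤ N := Submodule.smul_le_right
      rw [e]
      exact sup_le (e2.trans le_sup_left) le_sup_right
  have := key n
  rw [hn] at this
  simpa using this

theorem aux_linInd {R : Type u} [CommRing R] [IsLocalRing R] {ι B : Type u}
    (v : B → ι → R)
    (hv : LinearIndependent (ResidueField R) (fun b => fun i => residue R (v b i))) :
    LinearIndependent R v := by
  classical
  rw [linearIndependent_iff']
  intro s c hc
  let J : Ideal R := Ideal.span (Set.range fun b : s => c b)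
  have hmem : ∀ b : s, c b ∈ J := fun b => Ideal.subset_span ⟨b, rfl⟩
  have : Module.Finite R J :=
    Module.Finite.iff_fg.2 (Submodule.fg_span (Set.finite_range _))
  let x : s → ResidueField R ⊗[R] J := fun b => (1 : ResidueField R) ⊗ₜ[R] (⟨c b, hmem b⟩ : J)
  have hx : ∀ i, ∑ b : s, residue R (v b i) • x b = 0 := by
    intro i
    have h1 : ∑ b : s, v b i • (⟨c b, hmem b⟩ : J) = 0 := by
      apply Subtype.ext
      have := congrFun hc i
      rw [← Finset.sum_coe_sort] at this
      simpa [Finset.sum_apply, mul_comm] using this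
    have h2 := congrArg (fun y : J => (1 : ResidueField R) ⊗ₜ[R] y) h1
    simp only [TensorProduct.tmul_sum, TensorProduct.tmul_zero] at h2
    rw [← h2]
    refine Finset.sum_congr rfl fun b _ => ?_
    simp only [x]
    rw [TensorProduct.tmul_smul, TensorProduct.smul_tmul', TensorProduct.smul_tmul']
    congr 1
  have hx0 : ∀ b, x b = 0 := by
    intro b
    rw [← Module.forall_dual_apply_eq_zero_iff (ResidueField R)]
    intro φ
    have hv' := hv.comp (fun b : s => (b : B)) Subtype.val_injective
    rw [Fintype.linearIndependent_iff] at hv'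
    refine hv' (fun b => φ (x b)) ?_ b
    ext i
    have := congrArg φ (hx i)
    simpa [Finset.sum_apply, mul_comm] using this
  have hsub : Subsingleton (ResidueField R ⊗[R] J) := by
    refine subsingleton_of_forall_eq 0 fun z => ?_
    have hall : ∀ y : J, (1 : ResidueField R) ⊗ₜ[R] y = 0 := by
      rintro ⟨y, hy⟩
      obtain ⟨d, rfl⟩ := (Submodule.mem_span_range_iff_exists_fun R).1 hy
      have : (⟨∑ b : s, d b • c b, hy⟩ : J) = ∑ b : s, d b • (⟨c b, hmem b⟩ : J) := by
        apply Subtype.ext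
        simp
      rw [this, TensorProduct.tmul_sum]
      refine Finset.sum_eq_zero fun b _ => ?_
      rw [TensorProduct.tmul_smul]
      have := hx0 b
      simp only [x] at this
      rw [this, smul_zero]
    induction z with
    | zero => rfl
    | add a b ha hb => rw [ha, hb, add_zero]
    | tmul a y =>
      have : a ⊗ₜ[R] y = a • ((1 : ResidueField R) ⊗ₜ[R] y) := by
        rw [TensorProduct.smul_tmul', smul_eq_mul, mul_one]
      rw [this, hall, smul_zero]
  have hJ : Subsingleton J := IsLocalRing.subsingleton_tensorProduct.1 hsub
  intro b hb
  exact congrArg Subtype.val (Subsingleton.elim (⟨c b, hmem ⟨b, hb⟩⟩ : J) 0)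

/-- Let `(R, m)` be a local Artinian commutative ring and `ι` an infinite
index set. Then `R^ι` is a free `R`-module of rank `card (R/m) ^ card ι`
(cardinal exponentiation), where `R/m` is the residue field of `R`. -/
theorem pi_free_and_rank_eq_card_residueField_pow (R : Type u) [CommRing R] [IsLocalRing R]
    [IsArtinianRing R] (ι : Type u) [Infinite ι] :
    Module.Free R (ι → R) ∧
      Module.rank R (ι → R) = Cardinal.mk (IsLocalRing.ResidueField R) ^ Cardinal.mk ι := by
  let b := Module.Free.chooseBasis (ResidueField R) (ι → ResidueField R)
  have hl : ∀ j, ∃ w : ι → R, (fun i => residue R (w i)) = b j := by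
    intro j
    choose w hw using fun i => residue_surjective (b j i)
    exact ⟨w, funext hw⟩
  choose v hv using hl
  have hli : LinearIndependent R v := by
    apply aux_linInd
    have h : (fun j => fun i => residue R (v j i)) = b := funext hv
    rw [h]
    exact b.linearIndependent
  have hnil : IsNilpotent (maximalIdeal R) := by
    have := IsArtinianRing.isNilpotent_jacobson_bot (R := R)
    rwa [IsLocalRing.jacobson_eq_maximalIdeal _ bot_ne_top] at this
  have hsp : Submodule.span R (Set.range v) = ⊤ := by
    apply aux_nakayama (maximalIdeal R) hnil
    rw [eq_top_iff]
    intro f _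
    let d := b.repr (fun i => residue R (f i))
    choose e he using fun j => residue_surjective (d j)
    have hd : d.sum (fun j a => a • b j) = fun i => residue R (f i) :=
      b.linearCombination_repr _
    have h1 : (∑ j ∈ d.support, e j • v j) ∈ Submodule.span R (Set.range v) :=
      Submodule.sum_mem _ fun j _ => Submodule.smul_mem _ _ (Submodule.subset_span ⟨j, rfl⟩)
    have h2 : f - (∑ j ∈ d.support, e j • v j) ∈
        maximalIdeal R • (⊤ : Submodule R (ι → R)) := by
      apply aux_mem_smul_top _ (IsNoetherian.noetherian _)
      intro i
      rw [← residue_eq_zero_iff]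
      have := congrFun hd i
      simp only [Finsupp.sum, Finset.sum_apply, Pi.smul_apply, smul_eq_mul] at this
      simp only [Pi.sub_apply, Finset.sum_apply, Pi.smul_apply, smul_eq_mul, map_sub, map_sum,
        map_mul, he]
      rw [← this, sub_eq_zero]
      refine Finset.sum_congr rfl fun j _ => ?_
      rw [← hv j]
    have := Submodule.add_mem_sup h1 h2
    simpa using this
  let c := Module.Basis.mk hli hsp.ge
  refine ⟨Module.Free.of_basis c, ?_⟩
  rw [← c.mk_eq_rank'', b.mk_eq_rank'', rank_fun_infinite]
  simp
end

section
/- Let n ≥ 1, let (R_1, m_1), ..., (R_n, m_n) be local Artinian commutative rings, let R = R_1 × ⋯ × R_n, and let λ be an infinite cardinal (index set). Then R^λ is a free R-module if and only if card(R_k/m_k)^λ = card(R_1/m_1)^λ for every k ∈ {1,...,n}; and in that case the rank of R^λ over R equals card(R_1/m_1)^λ. -/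
universe u

lemma aux_basis_residue {S K B ι : Type u} [CommRing S] [Field K] (φ : S →+* K)
    (hφ : Function.Surjective φ) (hfg : (RingHom.ker φ).FG)
    (b : Module.Basis B S (ι → S)) : Nonempty (Module.Basis B K (ι → K)) := by
  classical
  let v : B → ι → K := fun i t => φ (b i t)
  refine ⟨Module.Basis.mk (v := v) ?_ ?_⟩
  · rw [linearIndependent_iff']
    intro s g hg i hi
    choose g' hg' using fun i => hφ (g i)
    obtain ⟨m, a, ha⟩ := Submodule.fg_iff_exists_fin_generating_family.mp hfg
    let x : ι → S := ∑ i ∈ s, g' i • b i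
    have hx : ∀ t, ∃ y : Fin m → S, ∑ j, y j • a j = x t := by
      intro t
      rw [← Submodule.mem_span_range_iff_exists_fun, ha, RingHom.mem_ker]
      have := congrFun hg t
      simpa [x, v, Finset.sum_apply, hg'] using this
    choose y hy using hx
    have hx2 : x = ∑ j, a j • (fun t => y t j) := by
      funext t
      rw [← hy t]
      simp [Finset.sum_apply, mul_comm]
    have h1 : b.repr x i = g' i := by
      simp only [x, map_sum, map_smul, Module.Basis.repr_self, Finsupp.coe_finsetSum,
        Finset.sum_apply, Finsupp.smul_apply, Finsupp.single_apply, smul_eq_mul]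
      simp [hi]
    have h2 : b.repr x i ∈ RingHom.ker φ := by
      rw [hx2]
      simp only [map_sum, map_smul, Finsupp.coe_finsetSum,
        Finset.sum_apply, Finsupp.smul_apply, smul_eq_mul]
      refine Ideal.sum_mem _ fun j _ => Ideal.mul_mem_right _ _ ?_
      rw [← ha]
      exact Submodule.subset_span ⟨j, rfl⟩
    rw [h1, RingHom.mem_ker, hg'] at h2
    exact h2
  · intro f _
    choose f' hf' using fun t => hφ (f t)
    have : f = ∑ i ∈ (b.repr f').support, φ (b.repr f' i) • v i := by
      funext t
      have h2 := b.linearCombination_repr f'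
      rw [Finsupp.linearCombination_apply, Finsupp.sum] at h2
      have h3 := congrArg φ (congrFun h2 t)
      rw [hf'] at h3
      rw [← h3]
      simp [Finset.sum_apply, v]
    rw [this]
    exact Submodule.sum_mem _ fun i _ => Submodule.smul_mem _ _ (Submodule.subset_span ⟨i, rfl⟩)

lemma aux_card {S K B ι : Type u} [CommRing S] [Field K] [Infinite ι] (φ : S →+* K)
    (hφ : Function.Surjective φ) (hfg : (RingHom.ker φ).FG)
    (b : Module.Basis B S (ι → S)) : Cardinal.mk B = Cardinal.mk K ^ Cardinal.mk ι := by
  obtain ⟨c⟩ := aux_basis_residue φ hφ hfg b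
  rw [c.mk_eq_rank'', rank_fun_infinite]
  simp

lemma aux_flat {R ι : Type u} [CommRing R] [IsNoetherianRing R] : Module.Flat R (ι → R) := by
  apply Module.Flat.of_forall_isTrivialRelation
  intro l f x h
  let N : Submodule R (Fin l → R) := LinearMap.ker (Fintype.linearCombination R f)
  obtain ⟨m, a, ha⟩ := Submodule.fg_iff_exists_fin_generating_family.mp
    (IsNoetherian.noetherian N)
  have hx : ∀ t, ∃ y : Fin m → R, ∑ j, y j • a j = fun i => x i t := by
    intro t
    rw [← Submodule.mem_span_range_iff_exists_fun, ha, LinearMap.mem_ker,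
      Fintype.linearCombination_apply]
    have := congrFun h t
    simpa [Finset.sum_apply, mul_comm] using this
  choose y hy using hx
  refine ⟨m, fun i j => a j i, fun j t => y t j, ?_, ?_⟩
  · intro i
    funext t
    have := congrFun (hy t) i
    simp only [Finset.sum_apply, Pi.smul_apply, smul_eq_mul] at this ⊢
    rw [← this]
    simp [mul_comm]
  · intro j
    have : a j ∈ N := by rw [← ha]; exact Submodule.subset_span ⟨j, rfl⟩
    rw [LinearMap.mem_ker, Fintype.linearCombination_apply] at this
    simpa [mul_comm] using this

open TensorProduct in
lemma aux_free {R P : Type u} [CommRing R] [IsLocalRing R] [IsArtinianRing R]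
    [AddCommGroup P] [Module R P] [Module.Flat R P] : Module.Free R P := by
  let k := IsLocalRing.ResidueField R
  let w := Module.Free.chooseBasis k (k ⊗[R] P)
  have ⟨v, eq⟩ := (TensorProduct.mk_surjective R P k Ideal.Quotient.mk_surjective).comp_left w
  have hli : LinearIndependent (IsLocalRing.ResidueField R)
      (TensorProduct.mk R (IsLocalRing.ResidueField R) P 1 ∘ v) := by
    have h := w.linearIndependent
    rw [← eq] at h
    exact h
  replace eq : ∀ i, TensorProduct.mk R k P 1 (v i) = w i := congrFun eq
  refine .of_basis <| .mk (Module.IsLocalRing.linearIndependent_of_flat v hli) ?_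
  set N := Submodule.span R (Set.range v) with hN
  have hnil : IsNilpotent (IsLocalRing.maximalIdeal R) :=
    (isArtinianRing_iff_isNilpotent_maximalIdeal R).mp inferInstance
  have key : ∀ p : P, ∃ q ∈ N, p - q ∈ IsLocalRing.maximalIdeal R • (⊤ : Submodule R P) := by
    intro p
    choose c hc using fun i => IsLocalRing.residue_surjective (w.repr (1 ⊗ₜ p) i)
    refine ⟨∑ i ∈ (w.repr (1 ⊗ₜ p)).support, c i • v i,
      Submodule.sum_mem _ fun i _ => Submodule.smul_mem _ _ (Submodule.subset_span ⟨i, rfl⟩), ?_⟩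
    have hker := LinearMap.ker_tensorProductMk (Q := P) (I := IsLocalRing.maximalIdeal R)
    rw [← hker, LinearMap.mem_ker, map_sub, sub_eq_zero, map_sum]
    have h2 := w.linearCombination_repr (1 ⊗ₜ p)
    rw [Finsupp.linearCombination_apply, Finsupp.sum] at h2
    refine h2.symm.trans (Finset.sum_congr rfl fun i _ => ?_)
    rw [map_smul, ← hc, ← eq]
    exact (algebraMap_smul k (c i) _)
  have key2 : ∀ n : ℕ, ⊤ ≤ N ⊔ (IsLocalRing.maximalIdeal R) ^ n • (⊤ : Submodule R P) := by
    intro n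
    induction n with
    | zero => simp
    | succ n ih =>
      have h1 : (⊤ : Submodule R P) ≤ N ⊔ IsLocalRing.maximalIdeal R • (⊤ : Submodule R P) := by
        intro p _
        obtain ⟨q, hq, hpq⟩ := key p
        exact Submodule.mem_sup.mpr ⟨q, hq, _, hpq, by abel⟩
      refine h1.trans (sup_le le_sup_left ?_)
      refine (Submodule.smul_mono le_rfl ih).trans ?_
      rw [Submodule.smul_sup, pow_succ', Submodule.mul_smul]
      exact sup_le_sup_right Submodule.smul_le_right _
  obtain ⟨n, hn⟩ := hnil
  have := key2 n
  rw [hn] at this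
  simpa using this

lemma aux_pi_free {n : ℕ} (R : Fin n → Type u) [∀ k, CommRing (R k)] (ι B : Type u)
    (b : ∀ k, Module.Basis B (R k) (ι → R k)) : Module.Free (∀ k, R k) (ι → ∀ k, R k) := by
  classical
  let v : B → ι → ∀ k, R k := fun i t k => b k i t
  refine .of_basis (.mk (v := v) ?_ ?_)
  · rw [linearIndependent_iff']
    intro s g hg i hi
    funext k
    have := linearIndependent_iff'.mp (b k).linearIndependent s (fun i => g i k) ?_ i hi
    · exact this
    · funext t
      have := congrFun (congrFun hg t) k
      simpa [Finset.sum_apply, v] using this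
  · intro x _
    let s : Finset B := Finset.univ.biUnion fun k => ((b k).repr (fun t => x t k)).support
    have : x = ∑ i ∈ s, (fun k => (b k).repr (fun t => x t k) i) • v i := by
      funext t k
      have h2 := (b k).linearCombination_repr (fun t => x t k)
      rw [Finsupp.linearCombination_apply, Finsupp.sum_of_support_subset (s := s)] at h2
      · have h3 := congrFun h2 t
        rw [← h3]
        simp [Finset.sum_apply, v]
      · exact Finset.subset_biUnion_of_mem
          (fun k => ((b k).repr (fun t => x t k)).support) (Finset.mem_univ k)
      · simp
    rw [this]
    exact Submodule.sum_mem _ fun i _ => Submodule.smul_mem _ _ (Submodule.subset_span ⟨i, rfl⟩)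

/-- Let `n ≥ 1`, let `(R 0, m 0), ..., (R (n-1), m (n-1))` be local
Artinian commutative rings, let `S = R 0 × ⋯ × R (n-1)` and let `ι` be an infinite index
set. Then `S^ι` is a free `S`-module if and only if
`card (R k / m k) ^ card ι = card (R 0 / m 0) ^ card ι` for every `k`; and in that case the
rank of `S^ι` over `S` equals `card (R 0 / m 0) ^ card ι`. -/
theorem pi_free_iff_residue_pows_eq (n : ℕ) (hn : 0 < n) (R : Fin n → Type u)
    [∀ k, CommRing (R k)] [∀ k, IsLocalRing (R k)] [∀ k, IsArtinianRing (R k)]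
    (ι : Type u) [Infinite ι] :
    (Module.Free (∀ k, R k) (ι → ∀ k, R k) ↔
      ∀ k : Fin n, Cardinal.mk (IsLocalRing.ResidueField (R k)) ^ Cardinal.mk ι =
        Cardinal.mk (IsLocalRing.ResidueField (R ⟨0, hn⟩)) ^ Cardinal.mk ι) ∧
    (Module.Free (∀ k, R k) (ι → ∀ k, R k) →
      Module.rank (∀ k, R k) (ι → ∀ k, R k) =
        Cardinal.mk (IsLocalRing.ResidueField (R ⟨0, hn⟩)) ^ Cardinal.mk ι) := by
  have main : ∀ (B : Type u) (_ : Module.Basis B (∀ k, R k) (ι → ∀ k, R k)) (k : Fin n),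
      Cardinal.mk B = Cardinal.mk (IsLocalRing.ResidueField (R k)) ^ Cardinal.mk ι := by
    intro B b k
    exact aux_card ((IsLocalRing.residue (R k)).comp (Pi.evalRingHom R k))
      (IsLocalRing.residue_surjective.comp (Function.surjective_eval k))
      (IsNoetherian.noetherian _) b
  refine ⟨⟨fun h k => ?_, fun h => ?_⟩, fun h => ?_⟩
  · have b := Module.Free.chooseBasis (∀ k, R k) (ι → ∀ k, R k)
    rw [← main _ b, ← main _ b]
  · have hfree : ∀ k, Module.Free (R k) (ι → R k) := fun k =>
      have := aux_flat (R := R k) (ι := ι)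
      aux_free
    let b := fun k => Module.Free.chooseBasis (R k) (ι → R k)
    have hc : ∀ k, Cardinal.mk (Module.Free.ChooseBasisIndex (R k) (ι → R k)) =
        Cardinal.mk (IsLocalRing.ResidueField (R k)) ^ Cardinal.mk ι := fun k =>
      aux_card (IsLocalRing.residue (R k)) IsLocalRing.residue_surjective
        (IsNoetherian.noetherian _) (b k)
    have he : ∀ k, Nonempty (Module.Free.ChooseBasisIndex (R k) (ι → R k) ≃
        Module.Free.ChooseBasisIndex (R ⟨0, hn⟩) (ι → R ⟨0, hn⟩)) := fun k =>
      Cardinal.eq.mp (by rw [hc, hc, h k])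
    exact aux_pi_free R ι _ fun k => (b k).reindex (he k).some
  · have b := Module.Free.chooseBasis (∀ k, R k) (ι → ∀ k, R k)
    have : Nontrivial (∀ k, R k) := Pi.nontrivial_at ⟨0, hn⟩
    rw [← main _ b, b.mk_eq_rank'']
end
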